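/- Let Φ̊ ⊂ ℝⁿ be the root system of type C_n (n ≥ 3), let (Λ_α) be an extension datum of type (Φ̊, Y) with common values Λ_s on short and Λ_ℓ on long roots (Λ_s is then an additive subgroup of Y), and let Φ^re be the associated set of real roots. Set Γ_s = {(α, β) ∈ Φ̊_s × Φ̊_s : α + β ∈ Φ̊_ℓ}. Then Ψ ⊆ Φ^re is a maximal closed subroot system whose gradient Gr(Ψ) is a semi-closed subroot system of Φ̊ if and only if there exist a subgroup H of Λ_s of index 2 with Λ_ℓ ⊆ H and a ℤ-linear map τ : Φ̊_s → Λ_s/H satisfying τ(α) ≠ −τ(β) for all (α, β) ∈ Γ_s, such that Ψ = {α ⊕ y : α ∈ Φ̊_s, y ∈ Λ_s, y + H = τ(α)}. -/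

import Mathlib

open scoped RealInnerProductSpace Pointwise

noncomputable section

namespace BdS

variable {V Y : Type*} [NormedAddCommGroup V] [InnerProductSpace ℝ V]
variable [AddCommGroup Y] [Module ℝ Y]

/-- `pairing β α = (β, α∨) = 2(β,α)/(α,α)`. -/
def pairing (β α : V) : ℝ := 2 * ⟪β, α⟫ / ⟪α, α⟫

/-- `reflRoot α v = s_α(v) = v − (v, α∨)α`. -/
def reflRoot (α v : V) : V := v - pairing v α • α

/-- A (finite) root system in `V`. -/
def IsRootSystem (Φ : Set V) : Prop :=
  Φ.Finite ∧ (0 : V) ∉ Φ ∧ Submodule.span ℝ Φ = ⊤ ∧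
    (∀ α ∈ Φ, ∀ β ∈ Φ, reflRoot α β ∈ Φ) ∧
    ∀ α ∈ Φ, ∀ β ∈ Φ, ∃ m : ℤ, pairing β α = (m : ℝ)

def IsReduced (Φ : Set V) : Prop :=
  ∀ α ∈ Φ, ∀ c : ℝ, c • α ∈ Φ → c • α = α ∨ c • α = -α

def IsIrreducible (Φ : Set V) : Prop :=
  ∀ Φ₁ Φ₂ : Set V, Φ = Φ₁ ∪ Φ₂ → (∀ x ∈ Φ₁, ∀ y ∈ Φ₂, ⟪x, y⟫ = 0) →
    Φ₁ = ∅ ∨ Φ₂ = ∅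

/-- divisible roots -/
def divSet (Φ : Set V) : Set V := {α ∈ Φ | (2:ℝ)⁻¹ • α ∈ Φ}
/-- non-divisible roots -/
def ndSet (Φ : Set V) : Set V := Φ \ divSet Φ
/-- short roots: non-divisible roots of non-maximal squared length -/
def shortSet (Φ : Set V) : Set V := {α ∈ ndSet Φ | ∃ β ∈ ndSet Φ, ⟪α, α⟫ < ⟪β, β⟫}
/-- long roots -/
def longSet (Φ : Set V) : Set V := ndSet Φ \ shortSet Φ

/-- An extension datum of type `(Φ, Y)`. -/
def IsExtensionDatum (Φ : Set V) (Λ : V → Set Y) : Prop :=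
  (∀ α ∈ Φ, ∀ β ∈ Φ, ∀ z ∈ Λ α, ∀ y ∈ Λ β, y - pairing β α • z ∈ Λ (reflRoot α β)) ∧
  (0 : Y) ∈ Λ 0 ∧
  (∀ α ∈ ndSet Φ, (0 : Y) ∈ Λ α) ∧
  (∀ α ∈ divSet Φ, (Λ α).Nonempty) ∧
  Submodule.span ℝ (⋃ α ∈ insert (0 : V) Φ, Λ α) = ⊤

/-- subroot system of a finite root system -/
def IsSubRS (Φ Δ : Set V) : Prop :=
  Δ.Nonempty ∧ Δ ⊆ Φ ∧ ∀ α ∈ Δ, ∀ β ∈ Δ, reflRoot α β ∈ Δ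

def IsClosedSubRS (Φ Δ : Set V) : Prop :=
  IsSubRS Φ Δ ∧ ∀ α ∈ Δ, ∀ β ∈ Δ, α + β ∈ Φ → α + β ∈ Δ

def IsMaxClosedSubRS (Φ Δ : Set V) : Prop :=
  IsClosedSubRS Φ Δ ∧ Δ ≠ Φ ∧
    ∀ Δ' : Set V, IsClosedSubRS Φ Δ' → Δ' ≠ Φ → Δ ⊆ Δ' → Δ' = Δ

/-- semi-closed subroot system, relative to given short/long/divisible parts -/
def IsSemiClosedSubRS (Φ Φs Φl Φd Δ : Set V) : Prop :=
  IsSubRS Φ Δ ∧ ¬ (∀ α ∈ Δ, ∀ β ∈ Δ, α + β ∈ Φ → α + β ∈ Δ) ∧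
    ∀ α ∈ Δ, ∀ β ∈ Δ, α + β ∈ Φ → α + β ∉ Δ →
      (α ∈ Φs ∧ β ∈ Φs ∧ α + β ∈ Φl ∪ Φd) ∨ (α ∈ Φl ∧ β ∈ Φl ∧ α + β ∈ Φd)

def IsMaxSemiClosedSubRS (Φ Φs Φl Φd Δ : Set V) : Prop :=
  IsSemiClosedSubRS Φ Φs Φl Φd Δ ∧
    ∀ Δ' : Set V, IsClosedSubRS Φ Δ' → Δ' ≠ Φ → ¬ Δ ⊂ Δ'

/-- the set of real roots attached to an extension datum -/
def PhiRe (Φ : Set V) (Λ : V → Set Y) : Set (V × Y) := {x | x.1 ∈ Φ ∧ x.2 ∈ Λ x.1}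

/-- affine reflection `s_{α ⊕ y}(β ⊕ z) = s_α(β) ⊕ (z − (β,α∨)y)` -/
def reflAff (a x : V × Y) : V × Y := (reflRoot a.1 x.1, x.2 - pairing x.1 a.1 • a.2)

/-- subroot system of a set of real roots `R` -/
def IsSubSys (R Ψ : Set (V × Y)) : Prop :=
  Ψ.Nonempty ∧ Ψ ⊆ R ∧ Ψ ≠ R ∧ ∀ a ∈ Ψ, ∀ x ∈ Ψ, reflAff a x ∈ Ψ

def IsClosedSubSys (R Ψ : Set (V × Y)) : Prop :=
  IsSubSys R Ψ ∧ ∀ x ∈ Ψ, ∀ y ∈ Ψ, x + y ∈ R → x + y ∈ Ψ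

def IsMaxClosedSubSys (R Ψ : Set (V × Y)) : Prop :=
  IsClosedSubSys R Ψ ∧ ∀ Ψ' : Set (V × Y), IsClosedSubSys R Ψ' → Ψ ⊆ Ψ' → Ψ' = Ψ

/-- gradient of a subroot system -/
def Gr (Ψ : Set (V × Y)) : Set V := {α | ∃ y : Y, (α, y) ∈ Ψ}

def Zset (Ψ : Set (V × Y)) (α : V) : Set Y := {y | (α, y) ∈ Ψ}

abbrev E (n : ℕ) := EuclideanSpace ℝ (Fin n)

def eps {n : ℕ} (i : Fin n) : E n := EuclideanSpace.single i 1

def shortBC (n : ℕ) : Set (E n) := {v | ∃ i : Fin n, v = eps i ∨ v = -eps i}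

def longBC (n : ℕ) : Set (E n) :=
  {v | ∃ i j : Fin n, i ≠ j ∧ ∃ c d : ℝ, (c = 1 ∨ c = -1) ∧ (d = 1 ∨ d = -1) ∧
    v = c • eps i + d • eps j}

def divBC (n : ℕ) : Set (E n) :=
  {v | ∃ i : Fin n, v = (2:ℝ) • eps i ∨ v = -((2:ℝ) • eps i)}

def BCn (n : ℕ) : Set (E n) := shortBC n ∪ longBC n ∪ divBC n
def Bn (n : ℕ) : Set (E n) := shortBC n ∪ longBC n
def Cn (n : ℕ) : Set (E n) := longBC n ∪ divBC n

/-!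
Call the roots `±εᵢ ± εⱼ` of `Cₙ` short and the roots `±2εᵢ` long; their names, inherited
from `BCₙ`, are `longBC n` and `divBC n`. Let `Ψ` be a maximal closed subroot system with
semi-closed gradient `Δ`.

Maximality forces `Δ` to generate the root lattice, since otherwise the real roots over the lattice
spanned by `Δ` would enlarge `Ψ`. Regard a short root `±εᵢ ± εⱼ` in `Δ` as an edge of a signed
graph on the coordinates. A sum that leaves `Δ` gives two edges of opposite signs between the same
two coordinates. As `Δ` generates the lattice, such a double edge spreads to all coordinates, and
`Δ` can contain no long root. So `Δ` is the set of all short roots.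

Any two short roots are connected by a chain of short roots with short differences, hence all
fibres of `Ψ` are cosets of one subgroup `H`, and choosing representatives on a basis gives a linear
map `T` with `Ψ = {α ⊕ y : y ∈ T α + H}`. Closedness forces `Λ_ℓ` to avoid the coset `T w + H` for
every long root `w`, and maximality forces `H` to be maximal among the proper subgroups of `Λ_s`.
Together with `2 Λ_s ⊆ Λ_ℓ` this makes the index of `H` two, and then `Λ_ℓ ⊆ H`. Conversely, if `H`
has index two, then adding any further root to `Ψ` generates all of `Φ^re`, along the same chains.
-/

section Reflections

theorem reflRoot_eq_reflection (α v : V) : reflRoot α v = (ℝ ∙ α)ᗮ.reflection v := by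
  rw [Submodule.reflection_orthogonal_apply, Submodule.reflection_singleton_apply, neg_sub,
    reflRoot, pairing, real_inner_self_eq_norm_sq, real_inner_comm, two_nsmul, ← add_smul,
    RCLike.ofReal_real_eq_id, id_eq, ← add_div, ← two_mul]

theorem reflRoot_add (α v w : V) : reflRoot α (v + w) = reflRoot α v + reflRoot α w := by
  simp only [reflRoot_eq_reflection, map_add]

theorem inner_reflRoot_reflRoot (α v w : V) : ⟪reflRoot α v, reflRoot α w⟫ = ⟪v, w⟫ := by
  simp only [reflRoot_eq_reflection, LinearIsometryEquiv.inner_map_map]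

theorem pairing_self {α : V} (hα : α ≠ 0) : pairing α α = 2 :=
  mul_div_cancel_right₀ 2 (inner_self_ne_zero.mpr hα)

theorem reflAff_self {a : V × Y} (ha : a.1 ≠ 0) : reflAff a a = -a := by
  ext <;> simp only [reflAff, reflRoot, pairing_self ha, Prod.fst_neg, Prod.snd_neg] <;> module

theorem IsSubSys.neg_mem {R Ψ : Set (V × Y)} (hΨ : IsSubSys R Ψ) {a : V × Y} (ha : a ∈ Ψ)
    (ha₀ : a.1 ≠ 0) : -a ∈ Ψ :=
  reflAff_self ha₀ ▸ hΨ.2.2.2 a ha a ha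

end Reflections

section RealRoots

variable {Φ : Set V} {Λ : V → Set Y}

theorem IsExtensionDatum.nonempty (hΛ : IsExtensionDatum Φ Λ) {α : V} (hα : α ∈ Φ) :
    (Λ α).Nonempty := by
  by_cases hdiv : α ∈ divSet Φ
  · exact hΛ.2.2.2.1 α hdiv
  · exact ⟨0, hΛ.2.2.1 α ⟨hα, hdiv⟩⟩

theorem reflAff_mem_PhiRe (hΦ : IsRootSystem Φ) (hΛ : IsExtensionDatum Φ Λ) {a x : V × Y}
    (ha : a ∈ PhiRe Φ Λ) (hx : x ∈ PhiRe Φ Λ) : reflAff a x ∈ PhiRe Φ Λ :=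
  ⟨hΦ.2.2.2.1 _ ha.1 _ hx.1, hΛ.1 _ ha.1 _ hx.1 _ ha.2 _ hx.2⟩

theorem exists_reflAff_eq_sub_zsmul (hΦ : IsRootSystem Φ) {a x : V × Y} (ha : a.1 ∈ Φ)
    (hx : x.1 ∈ Φ) : ∃ m : ℤ, reflAff a x = x - m • a := by
  obtain ⟨m, hm⟩ := hΦ.2.2.2.2 _ ha _ hx
  refine ⟨m, ?_⟩
  ext <;> simp [reflAff, reflRoot, hm, Int.cast_smul_eq_zsmul ℝ]

theorem isClosedSubSys_PhiRe_inter (hΦ : IsRootSystem Φ) (hΛ : IsExtensionDatum Φ Λ)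
    (M : AddSubgroup (V × Y)) (hne : (PhiRe Φ Λ ∩ M).Nonempty) (hlt : ¬ PhiRe Φ Λ ⊆ M) :
    IsClosedSubSys (PhiRe Φ Λ) (PhiRe Φ Λ ∩ M) := by
  refine ⟨⟨hne, Set.inter_subset_left, fun h ↦ hlt (Set.inter_eq_left.mp h), ?_⟩,
    fun x hx y hy hxy ↦ ⟨hxy, M.add_mem hx.2 hy.2⟩⟩
  intro a ha x hx
  obtain ⟨m, hm⟩ := exists_reflAff_eq_sub_zsmul hΦ ha.1.1 hx.1.1
  refine ⟨reflAff_mem_PhiRe hΦ hΛ ha.1 hx.1, ?_⟩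
  rw [hm]
  exact M.sub_mem hx.2 (M.zsmul_mem ha.2 m)

theorem IsMaxClosedSubSys.eq_inter (hΦ : IsRootSystem Φ) (hΛ : IsExtensionDatum Φ Λ)
    {Ψ : Set (V × Y)} (hΨ : IsMaxClosedSubSys (PhiRe Φ Λ) Ψ) {M : AddSubgroup (V × Y)}
    (hM : Ψ ⊆ M) (hlt : ¬ PhiRe Φ Λ ⊆ M) : Ψ = PhiRe Φ Λ ∩ M := by
  have hsub : Ψ ⊆ PhiRe Φ Λ ∩ M := Set.subset_inter hΨ.1.1.2.1 hM
  exact (hΨ.2 _ (isClosedSubSys_PhiRe_inter hΦ hΛ M (hΨ.1.1.1.mono hsub) hlt) hsub).symm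

/-- The sum of two roots of `Gr Ψ` that leaves `Gr Ψ` still lies in `ℤ (Gr Ψ)`, so the real roots
over `ℤ (Gr Ψ)` form a closed subroot system strictly larger than `Ψ`. -/
theorem IsMaxClosedSubSys.subset_closure_Gr (hΦ : IsRootSystem Φ) (hΛ : IsExtensionDatum Φ Λ)
    {Ψ : Set (V × Y)} (hΨ : IsMaxClosedSubSys (PhiRe Φ Λ) Ψ)
    (hGr : ¬ ∀ α ∈ Gr Ψ, ∀ β ∈ Gr Ψ, α + β ∈ Φ → α + β ∈ Gr Ψ) :
    Φ ⊆ AddSubgroup.closure (Gr Ψ) := by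
  contrapose! hGr
  obtain ⟨δ, hδ, hδΨ⟩ := Set.not_subset.mp hGr
  obtain ⟨y, hy⟩ := hΛ.nonempty hδ
  have hΨ_eq := hΨ.eq_inter hΦ hΛ
    (M := (AddSubgroup.closure (Gr Ψ)).comap (AddMonoidHom.fst V Y))
    (fun x hx ↦ AddSubgroup.subset_closure ⟨x.2, hx⟩) (fun h ↦ hδΨ (h (a := (δ, y)) ⟨hδ, hy⟩))
  intro α hα β hβ hαβ
  obtain ⟨z, hz⟩ := hΛ.nonempty hαβ
  exact ⟨z, hΨ_eq ▸ ⟨⟨hαβ, hz⟩,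
    add_mem (AddSubgroup.subset_closure hα) (AddSubgroup.subset_closure hβ)⟩⟩

end RealRoots

section IndexTwo

variable {G : Type*} [AddCommGroup G] {H K : AddSubgroup G}

theorem sub_mem_of_relIndex_eq_two (hHK : H.relIndex K = 2) {a b : G} (ha : a ∈ K) (hb : b ∈ K)
    (haH : a ∉ H) (hbH : b ∉ H) : a - b ∈ H := by
  obtain ⟨c, -, -, hc⟩ := AddSubgroup.relIndex_eq_two_iff_exists_notMem_and.mp hHK
  rw [← add_sub_add_right_eq_sub a b c]
  exact H.sub_mem ((hc a ha).resolve_right haH) ((hc b hb).resolve_right hbH)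

/-- Such a `t` forces `2K ⊆ H`: otherwise `H + 2K = K` would contain `t`. -/
theorem relIndex_eq_two_of_covBy (hHK : H ⋖ K) {t : G} (ht : t ∈ K)
    (htH : ∀ s ∈ K, 2 • s - t ∉ H) : H.relIndex K = 2 := by
  have ht_notMem : t ∉ H := fun h ↦ htH 0 K.zero_mem (by simpa using h)
  have two_nsmul_mem : ∀ s ∈ K, 2 • s ∈ H := by
    intro s hs
    have hle : H ⊔ K.map (nsmulAddMonoidHom 2) ≤ K := by
      refine sup_le hHK.le (AddSubgroup.map_le_iff_le_comap.mpr fun r hr ↦ ?_)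
      exact K.nsmul_mem hr 2
    rcases hHK.eq_or_eq le_sup_left hle with heq | heq
    · exact heq ▸ AddSubgroup.mem_sup_right ⟨s, hs, rfl⟩
    · obtain ⟨h, hh, _, ⟨r, hr, rfl⟩, rfl⟩ := AddSubgroup.mem_sup.mp (heq ▸ ht)
      exact absurd (by simpa using hh) (htH r hr)
  refine AddSubgroup.relIndex_eq_two_iff_exists_notMem_and.mpr ⟨t, ht, ht_notMem, fun b hb ↦ ?_⟩
  refine or_iff_not_imp_right.mpr fun hbH ↦ ?_
  have hsup : H ⊔ AddSubgroup.zmultiples b = K := by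
    refine (hHK.eq_or_eq le_sup_left
      (sup_le hHK.le (AddSubgroup.zmultiples_le_of_mem hb))).resolve_left fun heq ↦ hbH ?_
    exact heq ▸ AddSubgroup.mem_sup_right (AddSubgroup.mem_zmultiples b)
  obtain ⟨h, hh, _, ⟨m, rfl⟩, rfl⟩ := AddSubgroup.mem_sup.mp (hsup ▸ ht)
  have even_zsmul_mem : ∀ k : ℤ, (2 * k) • b ∈ H := fun k ↦ by
    have hmem := two_nsmul_mem _ (K.zsmul_mem hb k)
    rwa [← natCast_zsmul, smul_smul] at hmem
  obtain ⟨k, rfl | rfl⟩ := m.even_or_odd'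
  · exact absurd (H.add_mem hh (even_zsmul_mem k)) ht_notMem
  · have hsum : b + (h + (2 * k + 1) • b) = h + (2 * (k + 1)) • b := by module
    exact hsum ▸ H.add_mem hh (even_zsmul_mem (k + 1))

end IndexTwo

section TypeC

variable {n : ℕ}

theorem inner_eps_eps (i j : Fin n) : ⟪(eps i : E n), eps j⟫ = if i = j then 1 else 0 := by
  simp [eps, EuclideanSpace.inner_single_left]

theorem eps_mem_shortBC (i : Fin n) : eps i ∈ shortBC n := ⟨i, Or.inl rfl⟩

theorem neg_mem_shortBC {x : E n} (hx : x ∈ shortBC n) : -x ∈ shortBC n := by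
  obtain ⟨i, rfl | rfl⟩ := hx
  · exact ⟨i, Or.inr rfl⟩
  · exact ⟨i, Or.inl (neg_neg _)⟩

theorem norm_of_mem_shortBC {x : E n} (hx : x ∈ shortBC n) : ‖x‖ = 1 := by
  obtain ⟨i, rfl | rfl⟩ := hx <;> simp [eps]

theorem inner_self_of_mem_shortBC {x : E n} (hx : x ∈ shortBC n) : ⟪x, x⟫ = 1 :=
  inner_self_eq_one_of_norm_eq_one (norm_of_mem_shortBC hx)

theorem eq_or_eq_neg_or_orthogonal {x y : E n} (hx : x ∈ shortBC n) (hy : y ∈ shortBC n) :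
    y = x ∨ y = -x ∨ ⟪x, y⟫ = 0 := by
  obtain ⟨i, hi⟩ := hx
  obtain ⟨j, hj⟩ := hy
  obtain rfl | hij := eq_or_ne i j
  · rcases hi with rfl | rfl <;> rcases hj with rfl | rfl <;> simp
  · rcases hi with rfl | rfl <;> rcases hj with rfl | rfl <;> simp [inner_eps_eps, hij]

theorem exists_mem_shortBC_orthogonal (hn : 3 ≤ n) {x y : E n} (hx : x ∈ shortBC n)
    (hy : y ∈ shortBC n) : ∃ z ∈ shortBC n, ⟪x, z⟫ = 0 ∧ ⟪y, z⟫ = 0 := by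
  obtain ⟨i, hi⟩ := hx
  obtain ⟨j, hj⟩ := hy
  obtain ⟨k, hki, hkj⟩ := Fin.exists_ne_and_ne_of_two_lt i j hn
  refine ⟨eps k, eps_mem_shortBC k, ?_, ?_⟩
  · rcases hi with rfl | rfl <;> simp [inner_eps_eps, hki.symm]
  · rcases hj with rfl | rfl <;> simp [inner_eps_eps, hkj.symm]

theorem mem_longBC_iff {v : E n} :
    v ∈ longBC n ↔ ∃ x ∈ shortBC n, ∃ y ∈ shortBC n, ⟪x, y⟫ = 0 ∧ v = x + y := by
  constructor
  · rintro ⟨i, j, hij, c, d, hc, hd, rfl⟩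
    refine ⟨c • eps i, ⟨i, ?_⟩, d • eps j, ⟨j, ?_⟩, ?_, rfl⟩
    · rcases hc with rfl | rfl <;> simp
    · rcases hd with rfl | rfl <;> simp
    · simp [inner_smul_left, inner_smul_right, inner_eps_eps, hij]
  · rintro ⟨x, ⟨i, hi⟩, y, ⟨j, hj⟩, hxy, rfl⟩
    have hij : i ≠ j := by
      rintro rfl
      rcases hi with rfl | rfl <;> rcases hj with rfl | rfl <;> simp [eps] at hxy
    obtain ⟨c, hc, rfl⟩ : ∃ c : ℝ, (c = 1 ∨ c = -1) ∧ x = c • eps i := by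
      rcases hi with rfl | rfl
      exacts [⟨1, by simp⟩, ⟨-1, by simp⟩]
    obtain ⟨d, hd, rfl⟩ : ∃ d : ℝ, (d = 1 ∨ d = -1) ∧ y = d • eps j := by
      rcases hj with rfl | rfl
      exacts [⟨1, by simp⟩, ⟨-1, by simp⟩]
    exact ⟨i, j, hij, c, d, hc, hd, rfl⟩

theorem mem_divBC_iff {v : E n} : v ∈ divBC n ↔ ∃ x ∈ shortBC n, v = x + x := by
  constructor
  · rintro ⟨i, rfl | rfl⟩
    exacts [⟨_, ⟨i, Or.inl rfl⟩, two_smul ℝ _⟩, ⟨_, ⟨i, Or.inr rfl⟩, by rw [two_smul, neg_add]⟩]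
  · rintro ⟨x, ⟨i, rfl | rfl⟩, rfl⟩
    exacts [⟨i, Or.inl (two_smul ℝ _).symm⟩, ⟨i, Or.inr (by rw [two_smul, neg_add])⟩]

section Sums

variable {x y : E n} (hx : x ∈ shortBC n) (hy : y ∈ shortBC n) (hxy : ⟪x, y⟫ = 0)

include hx

theorem add_self_mem_divBC : x + x ∈ divBC n := mem_divBC_iff.mpr ⟨x, hx, rfl⟩

theorem pairing_add_self (v : E n) : pairing v (x + x) = ⟪v, x⟫ := by
  have := inner_self_of_mem_shortBC hx
  simp only [pairing, inner_add_left, inner_add_right, this]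
  ring

include hy hxy

theorem add_mem_longBC : x + y ∈ longBC n := mem_longBC_iff.mpr ⟨x, hx, y, hy, hxy, rfl⟩

theorem sub_mem_longBC : x - y ∈ longBC n :=
  sub_eq_add_neg x y ▸
    add_mem_longBC hx (neg_mem_shortBC hy) (by rw [inner_neg_right, hxy, neg_zero])

theorem inner_self_add_of_orthogonal : ⟪x + y, x + y⟫ = 2 := by
  have hyx : ⟪y, x⟫ = 0 := by rw [real_inner_comm, hxy]
  simp only [inner_add_left, inner_add_right, inner_self_of_mem_shortBC hx,
    inner_self_of_mem_shortBC hy, hxy, hyx]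
  norm_num

theorem pairing_add_of_orthogonal (v : E n) : pairing v (x + y) = ⟪v, x⟫ + ⟪v, y⟫ := by
  rw [pairing, inner_self_add_of_orthogonal hx hy hxy, inner_add_right]
  ring

end Sums

theorem inner_self_of_mem_longBC {α : E n} (hα : α ∈ longBC n) : ⟪α, α⟫ = 2 := by
  obtain ⟨x, hx, y, hy, hxy, rfl⟩ := mem_longBC_iff.mp hα
  exact inner_self_add_of_orthogonal hx hy hxy

theorem inner_self_of_mem_divBC {w : E n} (hw : w ∈ divBC n) : ⟪w, w⟫ = 4 := by
  obtain ⟨x, hx, rfl⟩ := mem_divBC_iff.mp hw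
  simp only [inner_add_left, inner_add_right, inner_self_of_mem_shortBC hx]
  norm_num

theorem notMem_divBC_of_mem_longBC {α : E n} (hα : α ∈ longBC n) : α ∉ divBC n := fun hw ↦ by
  linarith [inner_self_of_mem_longBC hα, inner_self_of_mem_divBC hw]

theorem mem_ndSet_of_mem_divBC {w : E n} (hw : w ∈ divBC n) : w ∈ ndSet (Cn n) := by
  refine ⟨Or.inr hw, fun ⟨_, hhalf⟩ ↦ ?_⟩
  have hnorm : ⟪(2 : ℝ)⁻¹ • w, (2 : ℝ)⁻¹ • w⟫ = 1 := by
    rw [real_inner_smul_left, real_inner_smul_right, inner_self_of_mem_divBC hw]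
    norm_num
  rcases hhalf with hhalf | hhalf
  · linarith [inner_self_of_mem_longBC hhalf]
  · linarith [inner_self_of_mem_divBC hhalf]

theorem ne_zero_of_mem_Cn {α : E n} (hα : α ∈ Cn n) : α ≠ 0 := by
  rw [← inner_self_ne_zero (𝕜 := ℝ)]
  rcases hα with hα | hα
  · rw [inner_self_of_mem_longBC hα]
    norm_num
  · rw [inner_self_of_mem_divBC hα]
    norm_num

theorem neg_mem_longBC {α : E n} (hα : α ∈ longBC n) : -α ∈ longBC n := by
  obtain ⟨x, hx, y, hy, hxy, rfl⟩ := mem_longBC_iff.mp hα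
  rw [neg_add]
  exact add_mem_longBC (neg_mem_shortBC hx) (neg_mem_shortBC hy) (by simpa using hxy)

theorem exists_inner_eq_intCast {x y : E n} (hx : x ∈ shortBC n) (hy : y ∈ shortBC n) :
    ∃ m : ℤ, ⟪x, y⟫ = m := by
  rcases eq_or_eq_neg_or_orthogonal hx hy with rfl | rfl | hxy
  · exact ⟨1, by simp [norm_of_mem_shortBC hx]⟩
  · exact ⟨-1, by simp [norm_of_mem_shortBC hx]⟩
  · exact ⟨0, by simp [hxy]⟩

theorem exists_pairing_eq_intCast {α x : E n} (hα : α ∈ Cn n) (hx : x ∈ shortBC n) :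
    ∃ m : ℤ, pairing x α = m := by
  rcases hα with hα | hα
  · obtain ⟨y, hy, z, hz, hyz, rfl⟩ := mem_longBC_iff.mp hα
    obtain ⟨k, hk⟩ := exists_inner_eq_intCast hx hy
    obtain ⟨l, hl⟩ := exists_inner_eq_intCast hx hz
    exact ⟨k + l, by rw [pairing_add_of_orthogonal hy hz hyz, hk, hl, Int.cast_add]⟩
  · obtain ⟨y, hy, rfl⟩ := mem_divBC_iff.mp hα
    rw [pairing_add_self hy]
    exact exists_inner_eq_intCast hx hy

theorem reflRoot_mem_shortBC {α x : E n} (hα : α ∈ Cn n) (hx : x ∈ shortBC n) :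
    reflRoot α x ∈ shortBC n := by
  rcases hα with hα | hα
  · obtain ⟨y, hy, z, hz, hyz, rfl⟩ := mem_longBC_iff.mp hα
    rw [reflRoot, pairing_add_of_orthogonal hy hz hyz, real_inner_comm, real_inner_comm z]
    rcases eq_or_eq_neg_or_orthogonal hy hx with rfl | rfl | hyx
    · simpa [norm_of_mem_shortBC hx, real_inner_comm, hyz] using neg_mem_shortBC hz
    · simpa [norm_of_mem_shortBC hy, real_inner_comm, hyz] using hz
    rcases eq_or_eq_neg_or_orthogonal hz hx with rfl | rfl | hzx
    · simpa [norm_of_mem_shortBC hx, hyz] using neg_mem_shortBC hy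
    · simpa [norm_of_mem_shortBC hz, hyz] using hy
    · simpa [hyx, hzx] using hx
  · obtain ⟨y, hy, rfl⟩ := mem_divBC_iff.mp hα
    rw [reflRoot, pairing_add_self hy, real_inner_comm]
    rcases eq_or_eq_neg_or_orthogonal hy hx with rfl | rfl | hyx
    · simpa [norm_of_mem_shortBC hx] using neg_mem_shortBC hx
    · simpa [norm_of_mem_shortBC hy] using hy
    · simpa [hyx] using hx

theorem reflRoot_mem_longBC {α β : E n} (hα : α ∈ Cn n) (hβ : β ∈ longBC n) :
    reflRoot α β ∈ longBC n := by
  obtain ⟨x, hx, y, hy, hxy, rfl⟩ := mem_longBC_iff.mp hβ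
  rw [reflRoot_add]
  exact add_mem_longBC (reflRoot_mem_shortBC hα hx) (reflRoot_mem_shortBC hα hy)
    (by rw [inner_reflRoot_reflRoot, hxy])

theorem reflRoot_mem_divBC {α w : E n} (hα : α ∈ Cn n) (hw : w ∈ divBC n) :
    reflRoot α w ∈ divBC n := by
  obtain ⟨x, hx, rfl⟩ := mem_divBC_iff.mp hw
  rw [reflRoot_add]
  exact add_self_mem_divBC (reflRoot_mem_shortBC hα hx)

theorem Cn_subset_shortBC_add_shortBC : Cn n ⊆ shortBC n + shortBC n := by
  rintro α (hα | hα)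
  · obtain ⟨x, hx, y, hy, -, rfl⟩ := mem_longBC_iff.mp hα
    exact Set.add_mem_add hx hy
  · obtain ⟨x, hx, rfl⟩ := mem_divBC_iff.mp hα
    exact Set.add_mem_add hx hx

theorem finite_shortBC : (shortBC n).Finite := by
  refine ((Set.finite_range eps).union (Set.finite_range fun i ↦ -eps i)).subset ?_
  rintro x ⟨i, rfl | rfl⟩
  exacts [Or.inl ⟨i, rfl⟩, Or.inr ⟨i, rfl⟩]

theorem span_Cn : Submodule.span ℝ (Cn n) = ⊤ := by
  rw [eq_top_iff, ← (EuclideanSpace.basisFun (Fin n) ℝ).toBasis.span_eq, Submodule.span_le]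
  rintro _ ⟨i, rfl⟩
  have hmem : eps i + eps i ∈ Submodule.span ℝ (Cn n) :=
    Submodule.subset_span (Or.inr (add_self_mem_divBC (eps_mem_shortBC i)))
  have hhalf : (2 : ℝ)⁻¹ • (eps i + eps i : E n) = eps i := by module
  rw [OrthonormalBasis.coe_toBasis, EuclideanSpace.basisFun_apply, ← eps, ← hhalf]
  exact Submodule.smul_mem _ _ hmem

theorem isRootSystem_Cn : IsRootSystem (Cn n) := by
  refine ⟨(finite_shortBC.add finite_shortBC).subset Cn_subset_shortBC_add_shortBC,
    fun h ↦ ne_zero_of_mem_Cn h rfl, span_Cn, fun α hα β hβ ↦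
      hβ.imp (reflRoot_mem_longBC hα) (reflRoot_mem_divBC hα), ?_⟩
  intro α hα β hβ
  obtain ⟨x, hx, y, hy, rfl⟩ := Cn_subset_shortBC_add_shortBC hβ
  obtain ⟨k, hk⟩ := exists_pairing_eq_intCast hα hx
  obtain ⟨l, hl⟩ := exists_pairing_eq_intCast hα hy
  refine ⟨k + l, ?_⟩
  rw [Int.cast_add, ← hk, ← hl, pairing, pairing, pairing, inner_add_left]
  ring

theorem longBC_induction (hn : 3 ≤ n) {P : E n → Prop}
    (step : ∀ α ∈ longBC n, ∀ β ∈ longBC n, β - α ∈ longBC n → P α → P β)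
    {α β : E n} (hα : α ∈ longBC n) (hβ : β ∈ longBC n) (hP : P α) : P β := by
  have replace_of_orthogonal : ∀ {x y z : E n}, x ∈ shortBC n → y ∈ shortBC n → z ∈ shortBC n →
      ⟪x, y⟫ = 0 → ⟪x, z⟫ = 0 → ⟪z, y⟫ = 0 → P (x + y) → P (x + z) := by
    intro x y z hx hy hz hxy hxz hzy
    refine step _ (add_mem_longBC hx hy hxy) _ (add_mem_longBC hx hz hxz) ?_
    rw [add_sub_add_left_eq_sub]
    exact sub_mem_longBC hz hy hzy
  have replace_right : ∀ {x y z : E n}, x ∈ shortBC n → y ∈ shortBC n → z ∈ shortBC n →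
      ⟪x, y⟫ = 0 → ⟪x, z⟫ = 0 → P (x + y) → P (x + z) := by
    intro x y z hx hy hz hxy hxz h
    rcases eq_or_eq_neg_or_orthogonal hz hy with rfl | rfl | hzy
    · exact h
    · obtain ⟨u, hu, hxu, hzu⟩ := exists_mem_shortBC_orthogonal hn hx hz
      exact replace_of_orthogonal hx hu hz hxu hxz hzu
        (replace_of_orthogonal hx hy hu hxy hxu (by rw [inner_neg_right, real_inner_comm, hzu,
          neg_zero]) h)
    · exact replace_of_orthogonal hx hy hz hxy hxz hzy h
  obtain ⟨x, hx, y, hy, hxy, rfl⟩ := mem_longBC_iff.mp hα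
  obtain ⟨z, hz, w, hw, hzw, rfl⟩ := mem_longBC_iff.mp hβ
  have replace_both : ∀ {z w : E n}, z ∈ shortBC n → w ∈ shortBC n → ⟪z, w⟫ = 0 → ⟪x, z⟫ = 0 →
      P (z + w) := by
    intro z w hz hw hzw hxz
    have hzx : ⟪z, x⟫ = 0 := by rw [real_inner_comm, hxz]
    have hPxz := replace_right hx hy hz hxy hxz hP
    exact replace_right hz hx hw hzx hzw (add_comm x z ▸ hPxz)
  rcases eq_or_eq_neg_or_orthogonal hx hz with rfl | rfl | hxz
  · exact replace_right hz hy hw hxy hzw hP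
  · rw [add_comm]
    exact replace_both hw hz (by rw [real_inner_comm, hzw]) (by simpa using hzw)
  · exact replace_both hz hw hzw hxz

theorem exists_sub_mem_longBC (hn : 3 ≤ n) {β : E n} (hβ : β ∈ longBC n) :
    ∃ α ∈ longBC n, β - α ∈ longBC n := by
  obtain ⟨x, hx, y, hy, -, rfl⟩ := mem_longBC_iff.mp hβ
  obtain ⟨z, hz, hxz, hyz⟩ := exists_mem_shortBC_orthogonal hn hx hy
  exact ⟨x + z, add_mem_longBC hx hz hxz,
    add_sub_add_left_eq_sub y z x ▸ sub_mem_longBC hy hz hyz⟩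

theorem exists_add_eq_of_mem_divBC (hn : 3 ≤ n) {w : E n} (hw : w ∈ divBC n) :
    ∃ α ∈ longBC n, ∃ β ∈ longBC n, w = α + β := by
  obtain ⟨x, hx, rfl⟩ := mem_divBC_iff.mp hw
  obtain ⟨y, hy, hxy, -⟩ := exists_mem_shortBC_orthogonal hn hx hx
  exact ⟨x + y, add_mem_longBC hx hy hxy, x - y, sub_mem_longBC hx hy hxy, by abel⟩

theorem exists_eq_add_of_inner_eq_one {α x : E n} (hα : α ∈ longBC n) (hx : x ∈ shortBC n)
    (hαx : ⟪α, x⟫ = 1) : ∃ y ∈ shortBC n, ⟪x, y⟫ = 0 ∧ α = x + y := by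
  obtain ⟨u, hu, v, hv, huv, rfl⟩ := mem_longBC_iff.mp hα
  have hvu : ⟪v, u⟫ = 0 := by rw [real_inner_comm, huv]
  rw [inner_add_left] at hαx
  rcases eq_or_eq_neg_or_orthogonal hu hx with rfl | rfl | hux
  · exact ⟨v, hv, huv, rfl⟩
  · rw [inner_neg_right, inner_neg_right, inner_self_of_mem_shortBC hu, hvu] at hαx
    norm_num at hαx
  rcases eq_or_eq_neg_or_orthogonal hv hx with rfl | rfl | hvx
  · exact ⟨u, hu, hvu, add_comm _ _⟩
  · rw [inner_neg_right, inner_neg_right, inner_self_of_mem_shortBC hv, huv] at hαx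
    norm_num at hαx
  · rw [hux, hvx] at hαx
    norm_num at hαx

theorem exists_eq_add_eq_sub_of_add_mem_divBC {α β : E n} (hα : α ∈ longBC n)
    (hβ : β ∈ longBC n) (hαβ : α + β ∈ divBC n) :
    ∃ x ∈ shortBC n, ∃ y ∈ shortBC n, ⟪x, y⟫ = 0 ∧ α = x + y ∧ β = x - y := by
  obtain ⟨x, hx, hsum⟩ := mem_divBC_iff.mp hαβ
  have hαα := inner_self_of_mem_longBC hα
  have hββ := inner_self_of_mem_longBC hβ
  have hnorm := inner_self_of_mem_divBC hαβ
  have hαx : ⟪α, x⟫ = 1 := by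
    have h : ⟪α, α + β⟫ = ⟪α, x + x⟫ := by rw [hsum]
    simp only [inner_add_left, inner_add_right, real_inner_comm α β] at h hnorm
    linarith
  obtain ⟨y, hy, hxy, rfl⟩ := exists_eq_add_of_inner_eq_one hα hx hαx
  refine ⟨x, hx, y, hy, hxy, rfl, ?_⟩
  rw [eq_sub_iff_add_eq, ← add_right_inj x, ← hsum]
  abel

theorem exists_inner_indicator {P : E n → Prop} (hP : ∀ x ∈ shortBC n, P (-x) ↔ P x) :
    ∃ u : E n, (∀ x ∈ shortBC n, P x → ⟪u, x⟫ = 1 ∨ ⟪u, x⟫ = -1) ∧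
      ∀ x ∈ shortBC n, ¬ P x → ⟪u, x⟫ = 0 := by
  classical
  have inner_eps (i : Fin n) :
      ⟪∑ k with P (eps k), (eps k : E n), eps i⟫ = if P (eps i) then 1 else 0 := by
    simp [sum_inner, inner_eps_eps]
  refine ⟨∑ k with P (eps k), eps k, ?_, ?_⟩
  · rintro x ⟨i, rfl | rfl⟩ hPx
    · simp [inner_eps, hPx]
    · simp [inner_eps, (hP _ (eps_mem_shortBC i)).mp hPx]
  · rintro x ⟨i, rfl | rfl⟩ hPx
    · simp [inner_eps, hPx]
    · simp [inner_eps, (hP _ (eps_mem_shortBC i)).not.mp hPx]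

/-- If no root of `Δ` crossed from `P` to its complement, the sum of the coordinates in `P` would
be even on the lattice generated by `Δ`, but it is odd on `a + b`. -/
theorem exists_crossing_of_subset_closure {Δ : Set (E n)} (hΔ : Δ ⊆ Cn n)
    (hgen : Cn n ⊆ AddSubgroup.closure Δ) {P : E n → Prop} (hP : ∀ x ∈ shortBC n, P (-x) ↔ P x)
    {a b : E n} (ha : a ∈ shortBC n) (hb : b ∈ shortBC n) (hPa : P a) (hPb : ¬ P b) :
    ∃ x ∈ shortBC n, ∃ y ∈ shortBC n, P x ∧ ¬ P y ∧ ⟪x, y⟫ = 0 ∧ x + y ∈ Δ := by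
  have orthogonal_of_crossing : ∀ x ∈ shortBC n, ∀ y ∈ shortBC n, P x → ¬ P y → ⟪x, y⟫ = 0 := by
    intro x hx y hy hPx hPy
    rcases eq_or_eq_neg_or_orthogonal hx hy with rfl | rfl | hxy
    exacts [absurd hPx hPy, absurd ((hP x hx).mpr hPx) hPy, hxy]
  by_contra! hcross
  obtain ⟨u, hu, hu₀⟩ := exists_inner_indicator hP
  have even_of_mem_closure : AddSubgroup.closure Δ ≤
      (AddSubgroup.zmultiples (2 : ℝ)).comap (innerₗ (E n) u).toAddMonoidHom := by
    refine (AddSubgroup.closure_le _).mpr fun v hv ↦ ?_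
    obtain ⟨x, hx, y, hy, rfl⟩ := Cn_subset_shortBC_add_shortBC (hΔ hv)
    change ⟪u, x + y⟫ ∈ AddSubgroup.zmultiples (2 : ℝ)
    rw [inner_add_right, AddSubgroup.mem_zmultiples_iff]
    by_cases hPx : P x <;> by_cases hPy : P y
    · rcases hu x hx hPx with hux | hux <;> rcases hu y hy hPy with huy | huy <;> rw [hux, huy]
      exacts [⟨1, by norm_num⟩, ⟨0, by norm_num⟩, ⟨0, by norm_num⟩, ⟨-1, by norm_num⟩]
    · exact absurd hv (hcross x hx y hy hPx hPy (orthogonal_of_crossing x hx y hy hPx hPy))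
    · exact absurd (add_comm x y ▸ hv)
        (hcross y hy x hx hPy hPx (orthogonal_of_crossing y hy x hx hPy hPx))
    · exact ⟨0, by rw [hu₀ x hx hPx, hu₀ y hy hPy]; norm_num⟩
  obtain ⟨m, hm⟩ := even_of_mem_closure
    (hgen (Or.inl (add_mem_longBC ha hb (orthogonal_of_crossing a ha b hb hPa hPb))))
  change m • (2 : ℝ) = ⟪u, a + b⟫ at hm
  rw [inner_add_right, hu₀ b hb hPb, add_zero, zsmul_eq_mul] at hm
  have hodd : m * 2 = 1 ∨ m * 2 = -1 := by
    rcases hu a ha hPa with hua | hua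
    exacts [Or.inl (by exact_mod_cast hm.trans hua), Or.inr (by exact_mod_cast hm.trans hua)]
  omega

/-- `Δ` is stable under negation and contains every short root of `Cₙ` that is a sum of two
elements of `Δ`: the part of closedness that survives in a semi-closed subroot system. -/
structure IsShortClosed (Δ : Set (E n)) : Prop where
  neg_mem : ∀ α ∈ Δ, -α ∈ Δ
  add_mem : ∀ α ∈ Δ, ∀ β ∈ Δ, α + β ∈ longBC n → α + β ∈ Δ

/-- Regarding a short root `x + y` as an edge of a signed graph on the coordinates, `x` and `y`
are joined in `Δ` by edges of both signs. -/
def IsDoubleEdge (Δ : Set (E n)) (x y : E n) : Prop := x + y ∈ Δ ∧ x - y ∈ Δ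

theorem isShortClosed_of_isSemiClosedSubRS {Δ : Set (E n)}
    (hΔ : IsSemiClosedSubRS (Cn n) (longBC n) (divBC n) ∅ Δ) : IsShortClosed Δ where
  neg_mem α hα := by
    have hneg : reflRoot α α = -α := by
      rw [reflRoot, pairing_self (ne_zero_of_mem_Cn (hΔ.1.2.1 hα))]
      module
    exact hneg ▸ hΔ.1.2.2 α hα α hα
  add_mem α hα β hβ hαβ := by
    by_contra hnot
    rcases hΔ.2.2 α hα β hβ (Or.inl hαβ) hnot with ⟨-, -, hdiv | hempty⟩ | ⟨-, -, hempty⟩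
    exacts [notMem_divBC_of_mem_longBC hαβ hdiv, hempty, hempty]

namespace IsShortClosed

variable {Δ : Set (E n)} (hΔ : IsShortClosed Δ)

include hΔ

theorem sub_mem {α β : E n} (hα : α ∈ Δ) (hβ : β ∈ Δ) (hαβ : α - β ∈ longBC n) : α - β ∈ Δ := by
  rw [sub_eq_add_neg] at hαβ ⊢
  exact hΔ.add_mem α hα _ (hΔ.neg_mem β hβ) hαβ

theorem longBC_subset_of_star {x : E n} (hx : x ∈ shortBC n)
    (hstar : ∀ y ∈ shortBC n, ⟪x, y⟫ = 0 → x + y ∈ Δ) : longBC n ⊆ Δ := by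
  intro α hα
  obtain ⟨z, hz, w, hw, hzw, rfl⟩ := mem_longBC_iff.mp hα
  have hwz : ⟪w, z⟫ = 0 := by rw [real_inner_comm, hzw]
  rcases eq_or_eq_neg_or_orthogonal hx hz with rfl | rfl | hxz
  · exact hstar w hw hzw
  · rw [← neg_neg w, ← neg_add]
    exact hΔ.neg_mem _ (hstar _ (neg_mem_shortBC hw) (by simpa using hzw))
  rcases eq_or_eq_neg_or_orthogonal hx hw with rfl | rfl | hxw
  · exact add_comm w z ▸ hstar z hz hwz
  · rw [add_comm, ← neg_neg z, ← neg_add]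
    exact hΔ.neg_mem _ (hstar _ (neg_mem_shortBC hz) (by simpa using hwz))
  have hsum : z + w = (x + z) - (x + -w) := by abel
  rw [hsum] at hα ⊢
  exact hΔ.sub_mem (hstar z hz hxz)
    (hstar _ (neg_mem_shortBC hw) (by rw [inner_neg_right, hxw, neg_zero])) hα

theorem longBC_subset_of_basis {i j : Fin n} (hij : i ≠ j)
    (hsub : ∀ a ≠ i, eps a - eps i ∈ Δ) (hadd : eps i + eps j ∈ Δ) : longBC n ⊆ Δ := by
  refine hΔ.longBC_subset_of_star (eps_mem_shortBC i) ?_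
  rintro _ ⟨a, rfl | rfl⟩ hia
  all_goals
    have hai : a ≠ i := by
      rintro rfl
      simp [eps] at hia
  · obtain rfl | haj := eq_or_ne a j
    · exact hadd
    have hdiff : eps a - eps j ∈ Δ := by
      rw [← sub_sub_sub_cancel_right (eps a : E n) _ (eps i)]
      refine hΔ.sub_mem (hsub a hai) (hsub j hij.symm) ?_
      rw [sub_sub_sub_cancel_right]
      exact sub_mem_longBC (eps_mem_shortBC a) (eps_mem_shortBC j) (by simp [inner_eps_eps, haj])
    have hsum : (eps i + eps a : E n) = (eps i + eps j) + (eps a - eps j) := by abel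
    rw [hsum]
    refine hΔ.add_mem _ hadd _ hdiff ?_
    rw [← hsum]
    exact add_mem_longBC (eps_mem_shortBC i) (eps_mem_shortBC a) hia
  · rw [← sub_eq_add_neg, ← neg_sub]
    exact hΔ.neg_mem _ (hsub a hai)

theorem isDoubleEdge_symm {x y : E n} (h : IsDoubleEdge Δ x y) : IsDoubleEdge Δ y x :=
  ⟨add_comm x y ▸ h.1, neg_sub x y ▸ hΔ.neg_mem _ h.2⟩

theorem isDoubleEdge_of_adj {p q r : E n} (h : IsDoubleEdge Δ p r) (hpq : p + q ∈ Δ)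
    (hq : q ∈ shortBC n) (hr : r ∈ shortBC n) (hrq : ⟪r, q⟫ = 0) : IsDoubleEdge Δ r q := by
  have hadd : r + q = (p + q) - (p - r) := by abel
  have hsub : r - q = (p + r) - (p + q) := by abel
  refine ⟨?_, ?_⟩
  · rw [hadd]
    exact hΔ.sub_mem hpq h.2 (hadd ▸ add_mem_longBC hr hq hrq)
  · rw [hsub]
    exact hΔ.sub_mem h.1 hpq (hsub ▸ sub_mem_longBC hr hq hrq)

theorem isDoubleEdge_of_eq_or_eq_neg {x y u v : E n} (h : IsDoubleEdge Δ x y)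
    (hu : u = x ∨ u = -x) (huv : u + v ∈ Δ) (hx : x ∈ shortBC n) (hv : v ∈ shortBC n)
    (hy : y ∈ shortBC n) (hxv : ⟪x, v⟫ = 0) (hyv : ⟪y, v⟫ = 0) : IsDoubleEdge Δ x v := by
  have hu_edge : IsDoubleEdge Δ u y := by
    rcases hu with rfl | rfl
    · exact h
    · refine ⟨?_, neg_add' x y ▸ hΔ.neg_mem _ h.1⟩
      rw [neg_add_eq_sub, ← neg_sub]
      exact hΔ.neg_mem _ h.2
  have hyv_edge := hΔ.isDoubleEdge_of_adj hu_edge huv hv hy hyv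
  exact hΔ.isDoubleEdge_symm
    (hΔ.isDoubleEdge_of_adj hyv_edge (add_comm x y ▸ h.1) hx hv (by rw [real_inner_comm, hxv]))

theorem longBC_subset_of_isDoubleEdge (hsub : Δ ⊆ Cn n) (hgen : Cn n ⊆ AddSubgroup.closure Δ)
    {x y : E n} (hx : x ∈ shortBC n) (hy : y ∈ shortBC n) (hedge : IsDoubleEdge Δ x y) :
    longBC n ⊆ Δ := by
  have hedge_neg : ∀ {z}, IsDoubleEdge Δ x z → IsDoubleEdge Δ x (-z) := fun {z} h ↦
    ⟨sub_eq_add_neg x z ▸ h.2, (sub_neg_eq_add x z).symm ▸ h.1⟩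
  let P : E n → Prop := fun u ↦ u = x ∨ u = -x ∨ IsDoubleEdge Δ x u
  have hP : ∀ u ∈ shortBC n, P (-u) ↔ P u := by
    intro u _
    have hiff : IsDoubleEdge Δ x (-u) ↔ IsDoubleEdge Δ x u :=
      ⟨fun h ↦ neg_neg u ▸ hedge_neg h, hedge_neg⟩
    simp only [P, hiff, neg_eq_iff_eq_neg, neg_neg]
    tauto
  suffices h : ∀ b ∈ shortBC n, P b by
    refine hΔ.longBC_subset_of_star hx fun z hz hxz ↦ ?_
    rcases h z hz with rfl | rfl | hxz_edge
    · linarith [inner_self_of_mem_shortBC hx]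
    · linarith [inner_self_of_mem_shortBC hx, inner_neg_right (𝕜 := ℝ) x x]
    · exact hxz_edge.1
  by_contra! hnot
  obtain ⟨b, hb, hPb⟩ := hnot
  obtain ⟨u, -, v, hv, hPu, hPv, -, huv⟩ :=
    exists_crossing_of_subset_closure hsub hgen hP hx hb (Or.inl rfl) hPb
  have orthogonal_of_P : ∀ z ∈ shortBC n, P z → ⟪z, v⟫ = 0 := by
    intro z hz hPz
    rcases eq_or_eq_neg_or_orthogonal hz hv with rfl | rfl | hzv
    exacts [absurd hPz hPv, absurd ((hP z hz).mpr hPz) hPv, hzv]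
  have hxv := orthogonal_of_P x hx (Or.inl rfl)
  have hyv := orthogonal_of_P y hy (Or.inr (Or.inr hedge))
  refine hPv (Or.inr (Or.inr ?_))
  rcases hPu with hu | hu | hxu
  · exact hΔ.isDoubleEdge_of_eq_or_eq_neg hedge (Or.inl hu) huv hx hv hy hxv hyv
  · exact hΔ.isDoubleEdge_of_eq_or_eq_neg hedge (Or.inr hu) huv hx hv hy hxv hyv
  · exact hΔ.isDoubleEdge_of_adj (hΔ.isDoubleEdge_symm hxu) huv hv hx hxv

end IsShortClosed

theorem eq_longBC_of_isSemiClosedSubRS {Δ : Set (E n)}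
    (hΔ : IsSemiClosedSubRS (Cn n) (longBC n) (divBC n) ∅ Δ)
    (hgen : Cn n ⊆ AddSubgroup.closure Δ) : Δ = longBC n := by
  have hshort := isShortClosed_of_isSemiClosedSubRS hΔ
  obtain ⟨x, hx, y, hy, hedge, hxx⟩ :
      ∃ x ∈ shortBC n, ∃ y ∈ shortBC n, IsDoubleEdge Δ x y ∧ x + x ∉ Δ := by
    obtain ⟨-, hopen, hsemi⟩ := hΔ
    push Not at hopen
    obtain ⟨α, hα, β, hβ, hαβ, hnot⟩ := hopen
    rcases hsemi α hα β hβ hαβ hnot with ⟨hαs, hβs, hdiv | hempty⟩ | ⟨-, -, hempty⟩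
    · obtain ⟨x, hx, y, hy, -, rfl, rfl⟩ := exists_eq_add_eq_sub_of_add_mem_divBC hαs hβs hdiv
      exact ⟨x, hx, y, hy, ⟨hα, hβ⟩, by simpa using hnot⟩
    · exact hempty.elim
    · exact hempty.elim
  refine Set.Subset.antisymm (fun w hw ↦ (hΔ.1.2.1 hw).resolve_right fun hdiv ↦ ?_)
    (hshort.longBC_subset_of_isDoubleEdge hΔ.1.2.1 hgen hx hy hedge)
  obtain ⟨b, hb, rfl⟩ := mem_divBC_iff.mp hdiv
  have hP : ∀ u ∈ shortBC n, -u + -u ∈ Δ ↔ u + u ∈ Δ := by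
    intro u _
    rw [← neg_add]
    exact ⟨fun h ↦ neg_neg (u + u) ▸ hshort.neg_mem _ h, hshort.neg_mem _⟩
  obtain ⟨u, hu, v, hv, huu, hvv, huv_orth, huv⟩ :=
    exists_crossing_of_subset_closure (P := fun u ↦ u + u ∈ Δ) hΔ.1.2.1 hgen hP hb hx hw hxx
  have hrefl : reflRoot (u + v) (u + u) = -(v + v) := by
    rw [reflRoot, pairing_add_of_orthogonal hu hv huv_orth, inner_add_left, inner_add_left,
      inner_self_of_mem_shortBC hu, huv_orth]
    module
  exact hvv (neg_neg (v + v) ▸ hshort.neg_mem _ (hrefl ▸ hΔ.1.2.2 _ huv _ huu))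

theorem longBC_nonempty (hn : 3 ≤ n) : (longBC n).Nonempty := by
  have hx := eps_mem_shortBC (⟨0, by omega⟩ : Fin n)
  obtain ⟨y, hy, hxy, -⟩ := exists_mem_shortBC_orthogonal hn hx hx
  exact ⟨_, add_mem_longBC hx hy hxy⟩

theorem divBC_nonempty (hn : 3 ≤ n) : (divBC n).Nonempty :=
  ⟨_, add_self_mem_divBC (eps_mem_shortBC (⟨0, by omega⟩ : Fin n))⟩

theorem isSemiClosedSubRS_longBC (hn : 3 ≤ n) :
    IsSemiClosedSubRS (Cn n) (longBC n) (divBC n) ∅ (longBC n) := by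
  refine ⟨⟨longBC_nonempty hn, Set.subset_union_left,
    fun α hα β hβ ↦ reflRoot_mem_longBC (Or.inl hα) hβ⟩, fun hclosed ↦ ?_,
    fun α hα β hβ hαβ hnot ↦ Or.inl ⟨hα, hβ, Or.inl (hαβ.resolve_left hnot)⟩⟩
  obtain ⟨w, hw⟩ := divBC_nonempty hn
  obtain ⟨α, hα, β, hβ, rfl⟩ := exists_add_eq_of_mem_divBC hn hw
  exact notMem_divBC_of_mem_longBC (hclosed α hα β hβ (Or.inr hw)) hw

/-- `Λ` is an extension datum of type `(Cₙ, Y)` with common values `Λs` on the short roots and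
`Λl` on the long roots of `Cₙ`. -/
structure IsTypeCDatum (Λ : E n → Set Y) (Λs : AddSubgroup Y) (Λl : Set Y) : Prop where
  isExtensionDatum : IsExtensionDatum (Cn n) Λ
  short_eq : ∀ α ∈ longBC n, Λ α = Λs
  long_eq : ∀ w ∈ divBC n, Λ w = Λl

/-- The pairs `(α, y)` with `y ∈ T α + H`, where `T` is a linear map. -/
def twistSubgroup (T : E n →ₗ[ℝ] Y) (H : AddSubgroup Y) : AddSubgroup (E n × Y) :=
  H.comap (LinearMap.snd ℝ (E n) Y - T ∘ₗ LinearMap.fst ℝ (E n) Y).toAddMonoidHom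

/-- The set `{α ⊕ y : α ∈ Φ̊_s, y + H = τ(α)}`, where the `ℤ`-linear map `τ` is encoded by a
linear lift `T` with `τ(α) = T α + H`. -/
def shortCoset (T : E n →ₗ[ℝ] Y) (H : AddSubgroup Y) : Set (E n × Y) :=
  {x | x.1 ∈ longBC n ∧ x.2 - T x.1 ∈ H}

/-- `H` is a subgroup of index two of `Λs` containing `Λl`, and `T` lifts a `ℤ`-linear map
`τ : Φ̊_s → Λs / H` with `τ(α) ≠ -τ(β)` whenever `α + β` is a long root of `Cₙ`; the last
condition reads `T (α + β) ∉ H`. -/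
structure IsTwist (Λs : AddSubgroup Y) (Λl : Set Y) (T : E n →ₗ[ℝ] Y) (H : AddSubgroup Y) :
    Prop where
  le : H ≤ Λs
  relIndex_eq_two : H.relIndex Λs = 2
  long_subset : Λl ⊆ H
  map_mem : ∀ α ∈ longBC n, T α ∈ Λs
  map_notMem : ∀ w ∈ divBC n, T w ∉ H

variable {Λ : E n → Set Y} {Λs : AddSubgroup Y} {Λl : Set Y} {T : E n →ₗ[ℝ] Y}
  {H : AddSubgroup Y}

theorem Gr_shortCoset : Gr (shortCoset T H) = longBC n := by
  ext α
  exact ⟨fun ⟨_, hα, _⟩ ↦ hα, fun hα ↦ ⟨T α, hα, by simp⟩⟩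

namespace IsTypeCDatum

variable (hΛ : IsTypeCDatum Λ Λs Λl)

include hΛ

theorem mk_mem_PhiRe_iff_of_mem_longBC {α : E n} (hα : α ∈ longBC n) {y : Y} :
    (α, y) ∈ PhiRe (Cn n) Λ ↔ y ∈ Λs := by
  change α ∈ Cn n ∧ y ∈ Λ α ↔ y ∈ Λs
  rw [hΛ.short_eq α hα]
  exact and_iff_right (Or.inl hα)

theorem mk_mem_PhiRe_iff_of_mem_divBC {w : E n} (hw : w ∈ divBC n) {y : Y} :
    (w, y) ∈ PhiRe (Cn n) Λ ↔ y ∈ Λl := by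
  change w ∈ Cn n ∧ y ∈ Λ w ↔ y ∈ Λl
  rw [hΛ.long_eq w hw]
  exact and_iff_right (Or.inr hw)

theorem isClosedSubSys_inter (M : AddSubgroup (E n × Y)) (hne : (PhiRe (Cn n) Λ ∩ M).Nonempty)
    (hlt : ¬ PhiRe (Cn n) Λ ⊆ M) : IsClosedSubSys (PhiRe (Cn n) Λ) (PhiRe (Cn n) Λ ∩ M) :=
  isClosedSubSys_PhiRe_inter isRootSystem_Cn hΛ.isExtensionDatum M hne hlt

end IsTypeCDatum

namespace IsTwist

variable (hT : IsTwist Λs Λl T H) (hΛ : IsTypeCDatum Λ Λs Λl)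

include hT hΛ

theorem PhiRe_inter_twistSubgroup : PhiRe (Cn n) Λ ∩ twistSubgroup T H = shortCoset T H := by
  ext ⟨α, y⟩
  constructor
  · rintro ⟨hx, hxH : y - T α ∈ H⟩
    refine ⟨hx.1.resolve_right fun hw ↦ hT.map_notMem α hw ?_, hxH⟩
    have hy : y ∈ H := hT.long_subset ((hΛ.mk_mem_PhiRe_iff_of_mem_divBC hw).mp hx)
    simpa using H.sub_mem hy hxH
  · rintro ⟨hα, hxH⟩
    refine ⟨(hΛ.mk_mem_PhiRe_iff_of_mem_longBC hα).mpr ?_, hxH⟩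
    simpa using Λs.add_mem (hT.le hxH) (hT.map_mem α hα)

theorem isClosedSubSys_shortCoset (hn : 3 ≤ n) :
    IsClosedSubSys (PhiRe (Cn n) Λ) (shortCoset T H) := by
  have hinter := hT.PhiRe_inter_twistSubgroup hΛ
  obtain ⟨α, hα⟩ := longBC_nonempty hn
  obtain ⟨b, hb, hbH, -⟩ :=
    AddSubgroup.relIndex_eq_two_iff_exists_notMem_and.mp hT.relIndex_eq_two
  rw [← hinter]
  refine hΛ.isClosedSubSys_inter _ (hinter ▸ ⟨(α, T α), hα, by simp⟩) fun hsub ↦ hbH ?_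
  have hmem : b + T α - T α ∈ H := hsub (a := (α, b + T α))
    ((hΛ.mk_mem_PhiRe_iff_of_mem_longBC hα).mpr (Λs.add_mem hb (hT.map_mem α hα)))
  simpa using hmem

section Maximal

variable {Ψ : Set (E n × Y)} (hΨ : IsClosedSubSys (PhiRe (Cn n) Λ) Ψ) (hsub : shortCoset T H ⊆ Ψ)

include hΨ hsub

theorem exists_mem_longBC_sub_notMem (hn : 3 ≤ n) {x : E n × Y} (hx : x ∈ Ψ)
    (hxT : x ∉ shortCoset T H) : ∃ α ∈ longBC n, ∃ y, (α, y) ∈ Ψ ∧ y - T α ∉ H := by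
  obtain ⟨w, y⟩ := x
  have hxR := hΨ.1.2.1 hx
  obtain hw | hw := hxR.1
  · exact ⟨w, hw, y, hx, fun h ↦ hxT ⟨hw, h⟩⟩
  obtain ⟨α, hα, γ, hγ, rfl⟩ := exists_add_eq_of_mem_divBC hn hw
  have hy : y ∈ H := hT.long_subset ((hΛ.mk_mem_PhiRe_iff_of_mem_divBC hw).mp hxR)
  have hneg : (-γ, -T γ) ∈ Ψ := hsub ⟨neg_mem_longBC hγ, by simp⟩
  have hsum : (α + γ, y) + (-γ, -T γ) = (α, y - T γ) := by ext <;> simp [sub_eq_add_neg]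
  refine ⟨α, hα, y - T γ, ?_, fun h ↦ hT.map_notMem _ hw ?_⟩
  · rw [← hsum]
    refine hΨ.2 _ hx _ hneg (hsum ▸ ?_)
    exact (hΛ.mk_mem_PhiRe_iff_of_mem_longBC hα).mpr
      (Λs.sub_mem (hT.le hy) (hT.map_mem γ hγ))
  · rw [map_add, ← sub_sub_cancel y (T α + T γ), ← sub_sub, sub_right_comm]
    exact H.sub_mem hy h

theorem mk_mem_of_sub_notMem (hn : 3 ≤ n) {α : E n} (hα : α ∈ longBC n) {y : Y}
    (hαy : (α, y) ∈ Ψ) (hyH : y - T α ∉ H) {β : E n} (hβ : β ∈ longBC n) {z : Y} (hz : z ∈ Λs) :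
    (β, z) ∈ Ψ := by
  have mem_of_adj : ∀ {α β : E n} {y z : Y}, β ∈ longBC n → β - α ∈ longBC n → (α, y) ∈ Ψ →
      z ∈ Λs → (z - T β) - (y - T α) ∈ H → (β, z) ∈ Ψ := by
    intro α β y z hβ hβα hαy hz hdiff
    have hstep : (β - α, z - y) ∈ Ψ :=
      hsub ⟨hβα, by simpa only [map_sub, sub_sub_sub_comm] using hdiff⟩
    have hsum : (α, y) + (β - α, z - y) = (β, z) := by ext <;> simp
    exact hsum ▸ hΨ.2 _ hαy _ hstep (hsum ▸ (hΛ.mk_mem_PhiRe_iff_of_mem_longBC hβ).mpr hz)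
  have mem_Λs : ∀ {γ : E n} {v : Y}, γ ∈ longBC n → (γ, v) ∈ Ψ → v ∈ Λs := fun hγ h ↦
    (hΛ.mk_mem_PhiRe_iff_of_mem_longBC hγ).mp (hΨ.1.2.1 h)
  have exists_notMem : ∀ γ ∈ longBC n, ∃ v, (γ, v) ∈ Ψ ∧ v - T γ ∉ H := by
    intro γ hγ
    refine longBC_induction hn (P := fun γ ↦ ∃ v, (γ, v) ∈ Ψ ∧ v - T γ ∉ H) ?_ hα hγ
      ⟨y, hαy, hyH⟩
    rintro γ hγ δ hδ hδγ ⟨v, hv, hvH⟩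
    have hδv : v - T γ + T δ ∈ Λs :=
      Λs.add_mem (Λs.sub_mem (mem_Λs hγ hv) (hT.map_mem γ hγ)) (hT.map_mem δ hδ)
    exact ⟨v - T γ + T δ, mem_of_adj hδ hδγ hv hδv (by simp), by simpa using hvH⟩
  by_cases hzH : z - T β ∈ H
  · exact hsub ⟨hβ, hzH⟩
  obtain ⟨γ, hγ, hβγ⟩ := exists_sub_mem_longBC hn hβ
  obtain ⟨v, hv, hvH⟩ := exists_notMem γ hγ
  exact mem_of_adj hβ hβγ hv hz (sub_mem_of_relIndex_eq_two hT.relIndex_eq_two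
    (Λs.sub_mem hz (hT.map_mem β hβ)) (Λs.sub_mem (mem_Λs hγ hv) (hT.map_mem γ hγ)) hzH hvH)

theorem eq_shortCoset_of_isClosedSubSys (hn : 3 ≤ n) : Ψ = shortCoset T H := by
  refine Set.Subset.antisymm (fun x hx ↦ ?_) hsub
  by_contra hxT
  obtain ⟨α, hα, y, hαy, hyH⟩ := hT.exists_mem_longBC_sub_notMem hΛ hΨ hsub hn hx hxT
  have hshort : ∀ β ∈ longBC n, ∀ z ∈ Λs, (β, z) ∈ Ψ := fun β hβ z hz ↦
    hT.mk_mem_of_sub_notMem hΛ hΨ hsub hn hα hαy hyH hβ hz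
  refine hΨ.1.2.2.1 (Set.Subset.antisymm hΨ.1.2.1 ?_)
  rintro ⟨w, z⟩ hR
  obtain hw | hw := hR.1
  · exact hshort w hw z ((hΛ.mk_mem_PhiRe_iff_of_mem_longBC hw).mp hR)
  obtain ⟨β, hβ, γ, hγ, rfl⟩ := exists_add_eq_of_mem_divBC hn hw
  have hz : z ∈ Λs := hT.le (hT.long_subset ((hΛ.mk_mem_PhiRe_iff_of_mem_divBC hw).mp hR))
  have hsum : (β, z) + (γ, 0) = (β + γ, z) := by ext <;> simp
  exact hsum ▸ hΨ.2 _ (hshort β hβ z hz) _ (hshort γ hγ 0 Λs.zero_mem) (hsum ▸ hR)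

end Maximal

theorem isMaxClosedSubSys_shortCoset (hn : 3 ≤ n) :
    IsMaxClosedSubSys (PhiRe (Cn n) Λ) (shortCoset T H) :=
  ⟨hT.isClosedSubSys_shortCoset hΛ hn,
    fun _ hΨ hsub ↦ hT.eq_shortCoset_of_isClosedSubSys hΛ hΨ hsub hn⟩

end IsTwist

theorem exists_pairing_eq_one_and_eq_two (hn : 3 ≤ n) :
    ∃ α ∈ longBC n, ∃ w ∈ divBC n, pairing α w = 1 ∧ pairing w α = 2 := by
  have hx := eps_mem_shortBC (⟨0, by omega⟩ : Fin n)
  set x : E n := eps ⟨0, by omega⟩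
  obtain ⟨y, hy, hxy, -⟩ := exists_mem_shortBC_orthogonal hn hx hx
  refine ⟨x + y, add_mem_longBC hx hy hxy, x + x, add_self_mem_divBC hx, ?_, ?_⟩
  · rw [pairing_add_self hx, inner_add_left, inner_self_of_mem_shortBC hx, real_inner_comm, hxy,
      add_zero]
  · rw [pairing_add_of_orthogonal hx hy hxy, inner_add_left, inner_add_left,
      inner_self_of_mem_shortBC hx, hxy]
    norm_num

namespace IsTypeCDatum

variable (hΛ : IsTypeCDatum Λ Λs Λl)

include hΛ

theorem zero_mem_long (hn : 3 ≤ n) : (0 : Y) ∈ Λl := by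
  obtain ⟨w, hw⟩ := divBC_nonempty hn
  exact hΛ.long_eq w hw ▸ hΛ.isExtensionDatum.2.2.1 w (mem_ndSet_of_mem_divBC hw)

theorem long_subset_short (hn : 3 ≤ n) : Λl ⊆ Λs := by
  intro y hy
  obtain ⟨α, hα, w, hw, hαw, -⟩ := exists_pairing_eq_one_and_eq_two hn
  have hmem := hΛ.isExtensionDatum.1 w (Or.inr hw) α (Or.inl hα) y (by rwa [hΛ.long_eq w hw]) 0
    (by rw [hΛ.short_eq α hα]; exact Λs.zero_mem)
  rw [hΛ.short_eq _ (reflRoot_mem_longBC (Or.inr hw) hα), hαw] at hmem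
  simpa using hmem

theorem two_nsmul_mem_long (hn : 3 ≤ n) {s : Y} (hs : s ∈ Λs) : 2 • s ∈ Λl := by
  obtain ⟨α, hα, w, hw, -, hwα⟩ := exists_pairing_eq_one_and_eq_two hn
  have hmem := hΛ.isExtensionDatum.1 α (Or.inl hα) w (Or.inr hw) (-s)
    (by rw [hΛ.short_eq α hα]; exact Λs.neg_mem hs) 0
    (by rw [hΛ.long_eq w hw]; exact hΛ.zero_mem_long hn)
  rw [hΛ.long_eq _ (reflRoot_mem_divBC (Or.inl hα) hw), hwα] at hmem
  simpa [two_smul] using hmem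

end IsTypeCDatum

section Maximal

variable (hΛ : IsTypeCDatum Λ Λs Λl) (hmax : IsMaxClosedSubSys (PhiRe (Cn n) Λ) (shortCoset T H))

include hΛ hmax

theorem add_mem_short_of_mem {α : E n} (hα : α ∈ longBC n) {d : Y} (hd : d ∈ H) :
    d + T α ∈ Λs :=
  (hΛ.mk_mem_PhiRe_iff_of_mem_longBC hα).mp (hmax.1.1.2.1 ⟨hα, by simpa using hd⟩)

theorem map_mem_short {α : E n} (hα : α ∈ longBC n) : T α ∈ Λs := by
  simpa using add_mem_short_of_mem hΛ hmax hα H.zero_mem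

theorem map_mem_short_of_mem_divBC (hn : 3 ≤ n) {w : E n} (hw : w ∈ divBC n) : T w ∈ Λs := by
  obtain ⟨β, hβ, γ, hγ, rfl⟩ := exists_add_eq_of_mem_divBC hn hw
  exact map_add T β γ ▸ Λs.add_mem (map_mem_short hΛ hmax hβ) (map_mem_short hΛ hmax hγ)

theorem sub_map_notMem (hn : 3 ≤ n) {w : E n} (hw : w ∈ divBC n) {y : Y} (hy : y ∈ Λl) :
    y - T w ∉ H := by
  intro hyH
  obtain ⟨α, hα, β, hβ, rfl⟩ := exists_add_eq_of_mem_divBC hn hw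
  have hsum : (α, y - T β) + (β, T β) = (α + β, y) := by ext <;> simp
  have hαy : (α, y - T β) ∈ shortCoset T H := ⟨hα, by rwa [sub_sub, add_comm (T β), ← map_add]⟩
  have hmem := hmax.1.2 _ hαy (β, T β) ⟨hβ, by simp⟩
    (hsum ▸ (hΛ.mk_mem_PhiRe_iff_of_mem_divBC hw).mpr hy)
  exact notMem_divBC_of_mem_longBC hmem.1 hw

theorem map_notMem_of_mem_divBC (hn : 3 ≤ n) {w : E n} (hw : w ∈ divBC n) : T w ∉ H := by
  simpa using sub_map_notMem hΛ hmax hn hw (hΛ.zero_mem_long hn)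

/-- A subgroup strictly between `H` and `Λs` would give a closed subroot system strictly larger
than `shortCoset T H`. -/
theorem covBy_of_isMaxClosedSubSys (hn : 3 ≤ n) : H ⋖ Λs := by
  obtain ⟨α, hα⟩ := longBC_nonempty hn
  obtain ⟨w, hw⟩ := divBC_nonempty hn
  have map_mem := fun {γ : E n} (hγ : γ ∈ longBC n) ↦ map_mem_short hΛ hmax hγ
  have hTw := map_mem_short_of_mem_divBC hΛ hmax hn hw
  have hle : H ≤ Λs := fun d hd ↦ by
    simpa using Λs.sub_mem (add_mem_short_of_mem hΛ hmax hα hd) (map_mem hα)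
  refine ⟨lt_of_le_of_ne hle fun h ↦ map_notMem_of_mem_divBC hΛ hmax hn hw (h ▸ hTw), ?_⟩
  intro K hHK hKΛ
  obtain ⟨b, hb, hbK⟩ := SetLike.exists_of_lt hKΛ
  obtain ⟨d, hd, hdH⟩ := SetLike.exists_of_lt hHK
  have mem_PhiRe : ∀ {c}, c ∈ Λs → (α, c + T α) ∈ PhiRe (Cn n) Λ := fun hc ↦
    (hΛ.mk_mem_PhiRe_iff_of_mem_longBC hα).mpr (Λs.add_mem hc (map_mem hα))
  have mem_twist : ∀ {c}, (α, c + T α) ∈ twistSubgroup T K ↔ c ∈ K := fun {c} ↦ by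
    change c + T α - T α ∈ K ↔ c ∈ K
    rw [add_sub_cancel_right]
  have heq := hmax.eq_inter isRootSystem_Cn hΛ.isExtensionDatum (M := twistSubgroup T K)
    (fun x hx ↦ hHK.le hx.2) (fun hsub ↦ hbK (mem_twist.mp (hsub (mem_PhiRe hb))))
  have hmem : (α, d + T α) ∈ shortCoset T H :=
    heq ▸ ⟨mem_PhiRe (hKΛ.le hd), mem_twist.mpr hd⟩
  exact hdH (by simpa using hmem.2)

theorem isTwist_of_isMaxClosedSubSys (hn : 3 ≤ n) : IsTwist Λs Λl T H := by
  have hcov := covBy_of_isMaxClosedSubSys hΛ hmax hn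
  have map_notMem := fun w hw ↦ map_notMem_of_mem_divBC (w := w) hΛ hmax hn hw
  obtain ⟨w, hw⟩ := divBC_nonempty hn
  have hTw := map_mem_short_of_mem_divBC hΛ hmax hn hw
  have hindex : H.relIndex Λs = 2 := relIndex_eq_two_of_covBy hcov hTw fun s hs ↦
    sub_map_notMem hΛ hmax hn hw (hΛ.two_nsmul_mem_long hn hs)
  refine ⟨hcov.le, hindex, fun y hy ↦ ?_, fun α hα ↦ map_mem_short hΛ hmax hα, map_notMem⟩
  by_contra hyH
  exact sub_map_notMem hΛ hmax hn hw hy (sub_mem_of_relIndex_eq_two hindex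
    (hΛ.long_subset_short hn hy) hTw hyH (map_notMem w hw))

end Maximal

/-- The translations of `Y` that preserve `Ψ`. -/
def translationStabilizer (Ψ : Set (E n × Y)) : AddSubgroup Y :=
  (AddAction.stabilizer (E n × Y) Ψ).comap (AddMonoidHom.inr (E n) Y)

omit [Module ℝ Y] in
theorem mem_translationStabilizer_iff {Ψ : Set (E n × Y)} {d : Y} :
    d ∈ translationStabilizer Ψ ↔ ∀ α y, (α, d + y) ∈ Ψ ↔ (α, y) ∈ Ψ := by
  rw [translationStabilizer, AddSubgroup.mem_comap, AddAction.mem_stabilizer_set, Prod.forall]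
  simp

theorem exists_linearMap_eps (t : Fin n → Y) : ∃ T : E n →ₗ[ℝ] Y, ∀ i, T (eps i) = t i := by
  let b := (EuclideanSpace.basisFun (Fin n) ℝ).toBasis
  have hb : ∀ i, b i = eps i := fun i ↦ by simp [b, eps]
  exact ⟨b.constr ℝ t, fun i ↦ hb i ▸ b.constr_basis ℝ t i⟩

section Gradient

variable {Ψ : Set (E n × Y)} (hΛ : IsTypeCDatum Λ Λs Λl)
  (hΨ : IsClosedSubSys (PhiRe (Cn n) Λ) Ψ) (hGr : Gr Ψ = longBC n)

include hΨ in
theorem mk_neg_mem {α : E n} {y : Y} (hα : (α, y) ∈ Ψ) : (-α, -y) ∈ Ψ :=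
  hΨ.1.neg_mem hα (ne_zero_of_mem_Cn (hΨ.1.2.1 hα).1)

include hΛ hΨ hGr

theorem mk_add_mem {α β : E n} {y z : Y} (hα : (α, y) ∈ Ψ) (hβ : (β, z) ∈ Ψ)
    (hαβ : α + β ∈ longBC n) : (α + β, y + z) ∈ Ψ := by
  have mem_Λs : ∀ {γ : E n} {v : Y}, (γ, v) ∈ Ψ → v ∈ Λs := fun {γ v} h ↦
    (hΛ.mk_mem_PhiRe_iff_of_mem_longBC (hGr ▸ ⟨v, h⟩)).mp (hΨ.1.2.1 h)
  exact hΨ.2 _ hα _ hβ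
    ((hΛ.mk_mem_PhiRe_iff_of_mem_longBC hαβ).mpr (Λs.add_mem (mem_Λs hα) (mem_Λs hβ)))

theorem mk_sub_mem {α β : E n} {y z : Y} (hα : (α, y) ∈ Ψ) (hβ : (β, z) ∈ Ψ)
    (hαβ : α - β ∈ longBC n) : (α - β, y - z) ∈ Ψ := by
  rw [sub_eq_add_neg] at hαβ
  rw [sub_eq_add_neg, sub_eq_add_neg]
  exact mk_add_mem hΛ hΨ hGr hα (mk_neg_mem hΨ hβ) hαβ

/-- The roots `εₐ - ε₀` and `ε₀ + ε₁` form a basis of `ℝⁿ`, so `T` can be prescribed there. -/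
theorem exists_linearMap_mk_mem (hn : 3 ≤ n) :
    ∃ T : E n →ₗ[ℝ] Y, ∀ α ∈ longBC n, (α, T α) ∈ Ψ := by
  let i : Fin n := ⟨0, by omega⟩
  let j : Fin n := ⟨1, by omega⟩
  have hij : i ≠ j := by simp [i, j]
  have exists_mk_mem : ∀ α ∈ longBC n, ∃ y, (α, y) ∈ Ψ := fun α hα ↦ by rwa [← hGr] at hα
  have exists_mk_sub_mem : ∀ a : Fin n,
      ∃ y, (a = i → y = 0) ∧ (a ≠ i → (eps a - eps i, y) ∈ Ψ) := by
    intro a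
    obtain rfl | hai := eq_or_ne a i
    · exact ⟨0, fun _ ↦ rfl, absurd rfl⟩
    obtain ⟨y, hy⟩ := exists_mk_mem _
      (sub_mem_longBC (eps_mem_shortBC a) (eps_mem_shortBC i) (by simp [inner_eps_eps, hai]))
    exact ⟨y, fun h ↦ absurd h hai, fun _ ↦ hy⟩
  choose z hzi hz using exists_mk_sub_mem
  obtain ⟨p, hp⟩ := exists_mk_mem _
    (add_mem_longBC (eps_mem_shortBC i) (eps_mem_shortBC j) (by simp [inner_eps_eps, hij]))
  obtain ⟨T, hT⟩ := exists_linearMap_eps fun a ↦ (2⁻¹ : ℝ) • (p - z j) + z a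
  have hclosed : IsShortClosed {α | (α, T α) ∈ Ψ} :=
    ⟨fun α hα ↦ show (-α, T (-α)) ∈ Ψ from map_neg T α ▸ mk_neg_mem hΨ hα,
      fun α hα β hβ hαβ ↦ show (α + β, T (α + β)) ∈ Ψ from
        map_add T α β ▸ mk_add_mem hΛ hΨ hGr hα hβ hαβ⟩
  refine ⟨T, hclosed.longBC_subset_of_basis hij (fun a hai ↦ ?_) ?_⟩
  · have hTa : T (eps a - eps i) = z a := by
      rw [map_sub, hT, hT, hzi i rfl]
      module
    rw [Set.mem_ofPred_eq, hTa]
    exact hz a hai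
  · have hTij : T (eps i + eps j) = p := by
      rw [map_add, hT, hT, hzi i rfl]
      module
    rwa [Set.mem_ofPred_eq, hTij]

theorem mk_sub_add_mem (hn : 3 ≤ n) {γ : E n} {y z : Y} (hy : (γ, y) ∈ Ψ) (hz : (γ, z) ∈ Ψ)
    {α : E n} {x : Y} (hα : (α, x) ∈ Ψ) : (α, y - z + x) ∈ Ψ := by
  have mem_longBC : ∀ {δ : E n} {v : Y}, (δ, v) ∈ Ψ → δ ∈ longBC n := fun h ↦ hGr ▸ ⟨_, h⟩
  obtain ⟨δ, hδ, hγδ⟩ := exists_sub_mem_longBC hn (mem_longBC hy)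
  refine longBC_induction hn (P := fun α ↦ ∀ x, (α, x) ∈ Ψ → (α, y - z + x) ∈ Ψ) ?_ hδ
    (mem_longBC hα) ?_ x hα
  · intro α hα β hβ hβα hP x hx
    obtain ⟨w, hw⟩ : α ∈ Gr Ψ := hGr ▸ hα
    have hdiff := mk_sub_mem hΛ hΨ hGr hx hw hβα
    have hsum := mk_add_mem hΛ hΨ hGr (hP w hw) hdiff (by rwa [add_sub_cancel])
    rwa [add_sub_cancel, add_assoc, add_sub_cancel] at hsum
  · intro x hx
    have hdiff := mk_sub_mem hΛ hΨ hGr hz hx hγδ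
    have h := mk_sub_mem hΛ hΨ hGr hy hdiff (by rwa [sub_sub_cancel])
    rwa [sub_sub_cancel, ← sub_add] at h

theorem exists_eq_shortCoset (hn : 3 ≤ n) :
    ∃ (T : E n →ₗ[ℝ] Y) (H : AddSubgroup Y), Ψ = shortCoset T H := by
  obtain ⟨T, hT⟩ := exists_linearMap_mk_mem hΛ hΨ hGr hn
  refine ⟨T, translationStabilizer Ψ, ?_⟩
  ext ⟨α, y⟩
  constructor
  · intro hy
    have hα : α ∈ longBC n := hGr ▸ ⟨y, hy⟩
    refine ⟨hα, mem_translationStabilizer_iff.mpr fun β x ↦ ⟨fun h ↦ ?_, fun h ↦ ?_⟩⟩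
    · simpa only [← add_assoc, sub_add_sub_cancel, sub_self, zero_add] using
        mk_sub_add_mem hΛ hΨ hGr hn (hT α hα) hy h
    · exact mk_sub_add_mem hΛ hΨ hGr hn hy (hT α hα) h
  · rintro ⟨hα, hy⟩
    simpa using (mem_translationStabilizer_iff.mp hy α (T α)).mpr (hT α hα)

end Gradient

theorem Gr_eq_longBC (hΛ : IsTypeCDatum Λ Λs Λl) {Ψ : Set (E n × Y)}
    (hmax : IsMaxClosedSubSys (PhiRe (Cn n) Λ) Ψ)
    (hGr : IsSemiClosedSubRS (Cn n) (longBC n) (divBC n) ∅ (Gr Ψ)) : Gr Ψ = longBC n :=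
  eq_longBC_of_isSemiClosedSubRS hGr
    (hmax.subset_closure_Gr isRootSystem_Cn hΛ.isExtensionDatum hGr.2.1)

theorem add_self_mem_closure_longBC (hn : 3 ≤ n) {x : E n} (hx : x ∈ shortBC n) :
    x + x ∈ AddSubgroup.closure (longBC n) := by
  obtain ⟨α, hα, β, hβ, hsum⟩ := exists_add_eq_of_mem_divBC hn (add_self_mem_divBC hx)
  exact hsum ▸ add_mem (AddSubgroup.subset_closure hα) (AddSubgroup.subset_closure hβ)

/-- Half of `τ (2 • eps i)` is the only possible value of `T` at `eps i`. -/
theorem exists_linearMap_extending (hn : 3 ≤ n) (τ : AddSubgroup.closure (longBC n) →+ Y) :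
    ∃ T : E n →ₗ[ℝ] Y, ∀ x : AddSubgroup.closure (longBC n), T x = τ x := by
  obtain ⟨T, hT⟩ := exists_linearMap_eps fun i ↦
    (2⁻¹ : ℝ) • τ ⟨eps i + eps i, add_self_mem_closure_longBC hn (eps_mem_shortBC i)⟩
  have map_add_self : ∀ x (hx : x ∈ shortBC n),
      T x + T x = τ ⟨x + x, add_self_mem_closure_longBC hn hx⟩ := by
    have map_eps_add_self : ∀ i,
        T (eps i) + T (eps i) =
          τ ⟨eps i + eps i, add_self_mem_closure_longBC hn (eps_mem_shortBC i)⟩ := fun i ↦ by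
      rw [hT]
      module
    rintro _ ⟨i, rfl | rfl⟩
    · exact map_eps_add_self i
    · rw [map_neg, ← neg_add, map_eps_add_self i, ← map_neg]
      congr 1
      exact Subtype.ext (neg_add _ _)
  have map_longBC : ∀ α (hα : α ∈ longBC n), T α = τ ⟨α, AddSubgroup.subset_closure hα⟩ := by
    intro α hα
    obtain ⟨x, hx, y, hy, -, rfl⟩ := mem_longBC_iff.mp hα
    refine smul_right_injective Y (two_ne_zero' ℝ) ?_
    change (2 : ℝ) • _ = (2 : ℝ) • _
    rw [two_smul, two_smul, ← map_add τ, map_add, add_add_add_comm, map_add_self x hx,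
      map_add_self y hy, ← map_add]
    congr 1
    exact Subtype.ext (add_add_add_comm x x y y)
  have hTτ : ∀ x (hx : x ∈ AddSubgroup.closure (longBC n)), T x = τ ⟨x, hx⟩ := by
    intro x hx
    induction hx using AddSubgroup.closure_induction with
    | mem α hα => exact map_longBC α hα
    | zero => rw [map_zero]; exact (map_zero τ).symm
    | add x y hx hy hTx hTy => rw [map_add, hTx, hTy, ← map_add]; rfl
    | neg x hx hTx => rw [map_neg, hTx, ← map_neg]; rfl
  exact ⟨T, fun x ↦ hTτ x x.2⟩

section Lift

variable {τ : AddSubgroup.closure (longBC n) →+ Y}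
  (hτ : ∀ x : AddSubgroup.closure (longBC n), T x = τ x)

include hτ

theorem isTwist_iff_of_extends (hn : 3 ≤ n) : IsTwist Λs Λl T H ↔
    H ≤ Λs ∧ (H.addSubgroupOf Λs).index = 2 ∧ Λl ⊆ H ∧ (∀ x, τ x ∈ Λs) ∧
      ∀ (α β : E n) (hα : α ∈ longBC n) (hβ : β ∈ longBC n), α + β ∈ divBC n →
        τ ⟨α, AddSubgroup.subset_closure hα⟩ + τ ⟨β, AddSubgroup.subset_closure hβ⟩ ∉ H := by
  simp only [← hτ]
  constructor
  · intro hT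
    have hle : AddSubgroup.closure (longBC n) ≤ Λs.comap T.toAddMonoidHom :=
      (AddSubgroup.closure_le _).mpr hT.map_mem
    exact ⟨hT.le, hT.relIndex_eq_two, hT.long_subset, fun x ↦ hle x.2,
      fun α β _ _ hαβ ↦ map_add T α β ▸ hT.map_notMem _ hαβ⟩
  · rintro ⟨hle, hindex, hlong, hmem, hnotMem⟩
    refine ⟨hle, hindex, hlong, fun α hα ↦ hmem ⟨α, AddSubgroup.subset_closure hα⟩, ?_⟩
    intro w hw
    obtain ⟨α, hα, β, hβ, rfl⟩ := exists_add_eq_of_mem_divBC hn hw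
    exact map_add T α β ▸ hnotMem α β hα hβ hw

theorem IsTwist.shortCoset_eq (hT : IsTwist Λs Λl T H) :
    shortCoset T H = {x | ∃ h : x.1 ∈ longBC n,
      x.2 ∈ Λs ∧ x.2 - τ ⟨x.1, AddSubgroup.subset_closure h⟩ ∈ H} := by
  ext ⟨α, y⟩
  simp only [← hτ]
  refine ⟨fun ⟨hα, hy⟩ ↦ ⟨hα, ?_, hy⟩, fun ⟨hα, _, hy⟩ ↦ ⟨hα, hy⟩⟩
  simpa using Λs.add_mem (hT.le hy) (hT.map_mem α hα)

end Lift

end TypeC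

theorem statement10_general {Y : Type*} [AddCommGroup Y] [Module ℝ Y]
    {n : ℕ} (hn : 3 ≤ n) (Λ : E n → Set Y) (Λs : AddSubgroup Y) (Λl : Set Y)
    (hED : IsExtensionDatum (Cn n) Λ)
    (hs : ∀ α ∈ longBC n, Λ α = (Λs : Set Y)) (hl : ∀ α ∈ divBC n, Λ α = Λl)
    (Ψ : Set (E n × Y)) :
    (IsMaxClosedSubSys (PhiRe (Cn n) Λ) Ψ ∧
        IsSemiClosedSubRS (Cn n) (longBC n) (divBC n) ∅ (Gr Ψ)) ↔
      ∃ (H : AddSubgroup Y) (τ : AddSubgroup.closure (longBC n) →+ Y),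
        H ≤ Λs ∧ (H.addSubgroupOf Λs).index = 2 ∧ Λl ⊆ (H : Set Y) ∧
        (∀ x, τ x ∈ Λs) ∧
        (∀ (α β : E n) (hα : α ∈ longBC n) (hβ : β ∈ longBC n), α + β ∈ divBC n →
          τ ⟨α, AddSubgroup.subset_closure hα⟩ +
            τ ⟨β, AddSubgroup.subset_closure hβ⟩ ∉ H) ∧
        Ψ = {x | ∃ h : x.1 ∈ longBC n,
          x.2 ∈ Λs ∧ x.2 - τ ⟨x.1, AddSubgroup.subset_closure h⟩ ∈ H} := by
  have hΛ : IsTypeCDatum Λ Λs Λl := ⟨hED, hs, hl⟩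
  constructor
  · rintro ⟨hmax, hGr⟩
    obtain ⟨T, H, rfl⟩ := exists_eq_shortCoset hΛ hmax.1 (Gr_eq_longBC hΛ hmax hGr) hn
    have hT := isTwist_of_isMaxClosedSubSys hΛ hmax hn
    let τ := T.toAddMonoidHom.comp (AddSubgroup.closure (longBC n)).subtype
    obtain ⟨hle, hindex, hlong, hmem, hnotMem⟩ :=
      (isTwist_iff_of_extends (τ := τ) (fun _ ↦ rfl) hn).mp hT
    exact ⟨H, τ, hle, hindex, hlong, hmem, hnotMem, hT.shortCoset_eq fun _ ↦ rfl⟩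
  · rintro ⟨H, τ, hle, hindex, hlong, hmem, hnotMem, rfl⟩
    obtain ⟨T, hTτ⟩ := exists_linearMap_extending hn τ
    have hT := (isTwist_iff_of_extends hTτ hn).mpr ⟨hle, hindex, hlong, hmem, hnotMem⟩
    rw [← hT.shortCoset_eq hTτ, Gr_shortCoset]
    exact ⟨hT.isMaxClosedSubSys_shortCoset hΛ hn, isSemiClosedSubRS_longBC hn⟩

/-- Theorem 4.1 (type `C_n`, `n ≥ 3`): maximal closed subroot systems with
semi-closed gradient.  The ℤ-linear map `τ : Φ̊_s → Λ_s/H` is encoded by a lift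
`τ : ⟨Φ̊_s⟩ →+ Y` with values in `Λ_s` (possible since `⟨Φ̊_s⟩` is free abelian);
`y + H = τ(α)` becomes `y - τ(α) ∈ H` and `τ(α) ≠ -τ(β)` becomes
`τ(α) + τ(β) ∉ H`. -/
theorem statement10 {Y : Type*} [AddCommGroup Y] [Module ℝ Y] [FiniteDimensional ℝ Y]
    {n : ℕ} (hn : 3 ≤ n) (Λ : E n → Set Y) (Λs : AddSubgroup Y) (Λl : Set Y)
    (hED : IsExtensionDatum (Cn n) Λ)
    (hs : ∀ α ∈ longBC n, Λ α = (Λs : Set Y)) (hl : ∀ α ∈ divBC n, Λ α = Λl)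
    (Ψ : Set (E n × Y)) :
    (IsMaxClosedSubSys (PhiRe (Cn n) Λ) Ψ ∧
        IsSemiClosedSubRS (Cn n) (longBC n) (divBC n) ∅ (Gr Ψ)) ↔
      ∃ (H : AddSubgroup Y) (τ : AddSubgroup.closure (longBC n) →+ Y),
        H ≤ Λs ∧ (H.addSubgroupOf Λs).index = 2 ∧ Λl ⊆ (H : Set Y) ∧
        (∀ x, τ x ∈ Λs) ∧
        (∀ (α β : E n) (hα : α ∈ longBC n) (hβ : β ∈ longBC n), α + β ∈ divBC n →
          τ ⟨α, AddSubgroup.subset_closure hα⟩ +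
            τ ⟨β, AddSubgroup.subset_closure hβ⟩ ∉ H) ∧
        Ψ = {x | ∃ h : x.1 ∈ longBC n,
          x.2 ∈ Λs ∧ x.2 - τ ⟨x.1, AddSubgroup.subset_closure h⟩ ∈ H} :=
  statement10_general hn Λ Λs Λl hED hs hl Ψ

end BdS
end
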